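/- arXiv:1010.3415 — 2 statements merged into one kernel-verified Lean document; each statement's English description precedes it below -/
import Mathlib

section
/- Let g ≥ 5 be an odd integer. Every subcubic graph G whose odd girth is at least g has fractional chromatic number at most 8/(3 − 6/(g+1)). -/
namespace SubcubicFC
open SimpleGraph


/-- A fractional colouring with equal-size colour sets. -/
def FC {V : Type*} (G : SimpleGraph V) (k : ℕ) : Prop :=
  ∃ m : ℕ, 0 < m ∧ ∃ f : V → Finset (Fin (8 * (k + 1) * m)),
    (∀ u v, G.Adj u v → Disjoint (f u) (f v)) ∧ ∀ v, (f v).card = 3 * k * m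

lemma FC.of_fintype {V : Type*} {G : SimpleGraph V} {k : ℕ} {Ω : Type*} [Fintype Ω]
    [Nonempty Ω] (f : V → Finset Ω)
    (h1 : ∀ u v, G.Adj u v → Disjoint (f u) (f v))
    (h2 : ∀ v, 3 * k * Fintype.card Ω ≤ 8 * (k + 1) * (f v).card) : FC G k := by
  classical
  have e : Fin (8 * (k + 1)) × Ω ≃ Fin (8 * (k + 1) * Fintype.card Ω) :=
    Fintype.equivOfCardEq (by simp)
  have h3 : ∀ v, ∃ s ⊆ (Finset.univ : Finset (Fin (8 * (k + 1)))) ×ˢ f v,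
      s.card = 3 * k * Fintype.card Ω := by
    intro v
    apply Finset.exists_subset_card_eq
    rw [Finset.card_product]
    simpa using h2 v
  choose s hs hc using h3
  refine ⟨Fintype.card Ω, Fintype.card_pos, fun v => (s v).map e.toEmbedding, ?_, ?_⟩
  · intro u v huv
    rw [Finset.disjoint_map]
    refine Finset.disjoint_left.2 fun x hx hy => ?_
    have a := Finset.mem_product.1 (hs u hx)
    have b := Finset.mem_product.1 (hs v hy)
    exact Finset.disjoint_left.1 (h1 u v huv) a.2 b.2
  · intro v
    simp [hc]

lemma FC.weights {V : Type*} [Fintype V] [DecidableEq V] {G : SimpleGraph V} {k : ℕ}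
    (hk : 0 < k) (h : FC G k) : ∃ w : Finset V → ℝ,
      (∀ I, 0 ≤ w I) ∧
      (∀ I : Finset V, w I ≠ 0 → ∀ a ∈ I, ∀ b ∈ I, ¬ G.Adj a b) ∧
      (∀ v : V, 1 ≤ ∑ I ∈ Finset.univ.filter (fun I : Finset V => v ∈ I), w I) ∧
      ∑ I : Finset V, w I ≤ 8 * (k + 1) / (3 * k) := by
  classical
  obtain ⟨m, hm, f, h1, h2⟩ := h
  let S : Fin (8 * (k + 1) * m) → Finset V := fun x => Finset.univ.filter (fun v => x ∈ f v)
  have hpos : (0 : ℝ) < 3 * k * m := by positivity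
  refine ⟨fun I => ((Finset.univ.filter (fun x => S x = I)).card : ℝ) / (3 * k * m),
    fun I => by positivity, ?_, ?_, ?_⟩
  · intro I hI a ha b hb hab
    have : (Finset.univ.filter (fun x => S x = I)).Nonempty := by
      rw [Finset.nonempty_iff_ne_empty]
      intro h0
      apply hI
      simp [h0]
    obtain ⟨x, hx⟩ := this
    simp only [Finset.mem_filter, Finset.mem_univ, true_and] at hx
    subst hx
    simp only [S, Finset.mem_filter, Finset.mem_univ, true_and] at ha hb
    exact Finset.disjoint_left.1 (h1 a b hab) ha hb
  · intro v
    rw [← Finset.sum_div, le_div_iff₀ hpos, one_mul, ← Nat.cast_sum]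
    have : (f v).card = ∑ I ∈ Finset.univ.filter (fun I : Finset V => v ∈ I),
        (Finset.univ.filter (fun x => S x = I)).card := by
      rw [Finset.card_eq_sum_card_fiberwise (f := S)
        (t := Finset.univ.filter (fun I : Finset V => v ∈ I))]
      · apply Finset.sum_congr rfl
        intro I hI
        congr 1
        ext x
        simp only [Finset.mem_filter, Finset.mem_univ, true_and, and_iff_right_iff_imp] at hI ⊢
        rintro rfl
        simpa [S] using hI
      · intro x hx
        simpa [S] using hx
    rw [← this, h2]
    push_cast
    exact le_rfl
  · rw [← Finset.sum_div, ← Nat.cast_sum]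
    rw [← Finset.card_eq_sum_card_fiberwise (f := S) (s := Finset.univ) (t := Finset.univ)
      (fun _ _ => by simp)]
    simp only [Finset.card_univ, Fintype.card_fin]
    push_cast
    apply le_of_eq
    have : (m:ℝ) ≠ 0 := by positivity
    have : (k:ℝ) ≠ 0 := by positivity
    field_simp

lemma FC.cut {V : Type*} {G : SimpleGraph V} {k : ℕ} (K : Set V) (u v : V) (hu : u ∈ K)
    (hv : v ∉ K) (hK : ∀ x ∈ K, ∀ y ∉ K, G.Adj x y → x = u ∧ y = v)
    (h : FC (G.deleteEdges {s(u, v)}) k) : FC G k := by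
  classical
  obtain ⟨m, hm, f, h1, h2⟩ := h
  obtain ⟨t, ht, htc⟩ := Finset.exists_subset_card_eq (s := (f v)ᶜ) (n := 3 * k * m) (by
    rw [Finset.card_compl, h2, Fintype.card_fin]
    have : 3 * k * m + 3 * k * m ≤ 8 * (k + 1) * m := by nlinarith
    omega)
  obtain ⟨π, hπ⟩ : ∃ π : Equiv.Perm (Fin (8 * (k + 1) * m)), (f u).map π.toEmbedding = t := by
    exact Equiv.Perm.exists_map_finset_eq _ _ (by rw [h2, htc])
  refine ⟨m, hm, fun x => if x ∈ K then (f x).map π.toEmbedding else f x, ?_, ?_⟩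
  · have key : ∀ x ∈ K, ∀ y ∉ K, G.Adj x y → Disjoint ((f x).map π.toEmbedding) (f y) := by
      intro x hx y hy hxy
      obtain ⟨rfl, rfl⟩ := hK x hx y hy hxy
      rw [hπ]
      exact Finset.disjoint_left.2 fun z hz hz' => by simpa [hz'] using ht hz
    have key2 : ∀ x y, (x ∈ K ↔ y ∈ K) → G.Adj x y → Disjoint (f x) (f y) := by
      intro x y hxy hadj
      apply h1
      rw [SimpleGraph.deleteEdges_adj]
      refine ⟨hadj, ?_⟩
      simp only [Set.mem_singleton_iff, Sym2.eq_iff]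
      rintro (⟨rfl, rfl⟩ | ⟨rfl, rfl⟩) <;> tauto
    intro x y hxy
    by_cases hx : x ∈ K <;> by_cases hy : y ∈ K <;> simp only [hx, hy, if_true, if_false]
    · rw [Finset.disjoint_map]
      exact key2 x y (by tauto) hxy
    · exact key x hx y hy hxy
    · exact (key y hy x hx hxy.symm).symm
    · exact key2 x y (by tauto) hxy
  · intro x
    dsimp only
    split_ifs <;> simp [h2]



lemma path_edge {V : Type*} {H : SimpleGraph V} {u v : V} (p : H.Walk v u) (hp : p.IsPath)
    (h : s(u, v) ∈ p.edges) : p.length = 1 := by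
  cases p with
  | nil => simp at h
  | @cons _ w _ h' q =>
    rw [Walk.cons_isPath_iff] at hp
    rw [Walk.edges_cons, List.mem_cons] at h
    rcases h with h | h
    · have : w = u := by
        rw [Sym2.eq_iff] at h
        rcases h with ⟨h1, h2⟩ | ⟨h1, h2⟩
        · subst h1; exact absurd h2 (by intro h2; subst h2; exact h'.ne rfl)
        · exact h1.symm
      subst this
      have := (Walk.isPath_iff_nil.1 hp.1).eq_nil
      subst this
      simp
    · exact absurd (Walk.snd_mem_support_of_mem_edges q h) hp.2

lemma path_or_odd_cycle {V : Type*} {H : SimpleGraph V} {u v : V} (p : H.Walk u v) :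
    (∃ q : H.Walk u v, q.IsPath ∧ (Even q.length ↔ Even p.length)) ∨
      ∃ (x : V) (c : H.Walk x x), c.IsCycle ∧ Odd c.length := by
  classical
  induction p with
  | nil => exact Or.inl ⟨Walk.nil, by simp, by simp⟩
  | @cons u w v h p ih =>
    rcases ih with ⟨q, hq, hpar⟩ | ih
    swap
    · exact Or.inr ih
    by_cases hu : u ∈ q.support
    · have hlen : (q.takeUntil u hu).length + (q.dropUntil u hu).length = q.length := by
        rw [← Walk.length_append, Walk.take_spec]
      by_cases hpar2 : Even (q.takeUntil u hu).length
      · right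
        refine ⟨u, Walk.cons h (q.takeUntil u hu), ?_, ?_⟩
        · rw [Walk.cons_isCycle_iff]
          refine ⟨hq.takeUntil hu, fun he => ?_⟩
          have := path_edge _ (hq.takeUntil hu) he
          rw [this] at hpar2
          exact absurd hpar2 (by decide)
        · rw [Walk.length_cons]
          exact hpar2.add_one
      · left
        refine ⟨q.dropUntil u hu, hq.dropUntil hu, ?_⟩
        rw [Walk.length_cons, Nat.even_add_one, ← hpar, ← hlen, Nat.even_add]
        tauto
    · left
      refine ⟨Walk.cons h q, ?_, ?_⟩
      · rw [Walk.cons_isPath_iff]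
        exact ⟨hq, hu⟩
      · rw [Walk.length_cons, Walk.length_cons, Nat.even_add_one, Nat.even_add_one, hpar]

/-- small classes are bipartite -/
lemma two_color {V : Type*} [Fintype V] {G : SimpleGraph V} {k : ℕ}
    (hodd : ∀ (v : V) (w : G.Walk v v), w.IsCycle → Odd w.length → 2 * k + 1 ≤ w.length)
    (D : Set V) {Λ : Type*} (ℓ : V → Λ)
    (hsize : ∀ x, {v | v ∉ D ∧ ℓ v = x}.ncard ≤ 2 * k) :
    ∃ c : V → Bool, ∀ u v, G.Adj u v → u ∉ D → v ∉ D → ℓ u = ℓ v → c u ≠ c v := by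
  classical
  let H : SimpleGraph V :=
    { Adj := fun u v => G.Adj u v ∧ u ∉ D ∧ v ∉ D ∧ ℓ u = ℓ v
      symm := ⟨fun u v h => ⟨h.1.symm, h.2.2.1, h.2.1, h.2.2.2.symm⟩⟩
      loopless := ⟨fun u h => h.1.ne rfl⟩ }
  have hHG : H ≤ G := fun u v h => h.1
  have hcol : H.Colorable 2 := by
    rw [two_colorable_iff_forall_loop_even]
    intro u w
    by_contra hw
    rcases path_or_odd_cycle w with ⟨q, hq, hpar⟩ | ⟨x, c, hc, hco⟩
    · have := (Walk.isPath_iff_nil.1 hq).eq_nil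
      subst this
      simp at hpar
      exact hw hpar
    · have h1 := hodd x (c.mapLe hHG) (by rwa [Walk.isCycle_mapLe]) (by simpa using hco)
      have h1' : 2 * k + 1 ≤ c.length := by simpa using h1
      have hsup : ∀ {a b : V} (p : H.Walk a b), ∀ y ∈ p.support.tail, y ∉ D ∧ ℓ y = ℓ a := by
        intro a b p
        induction p with
        | nil => simp
        | @cons a a' b h p ih =>
          intro y hy
          rw [Walk.support_cons, List.tail_cons, Walk.mem_support_iff] at hy
          rcases hy with rfl | hy
          · exact ⟨h.2.2.1, h.2.2.2.symm⟩
          · exact ⟨(ih y hy).1, (ih y hy).2.trans h.2.2.2.symm⟩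
      have h2 : c.support.tail.toFinset.card = c.length := by
        rw [List.toFinset_card_of_nodup hc.support_nodup]
        simp
      have h3 : (c.support.tail.toFinset : Set V) ⊆ {v | v ∉ D ∧ ℓ v = ℓ x} := by
        intro y hy
        exact hsup c y (by simpa using hy)
      have h4 := Set.ncard_le_ncard h3 (Set.toFinite _)
      rw [Set.ncard_coe_finset, h2] at h4
      have := hsize (ℓ x)
      omega
  obtain ⟨c⟩ := hcol
  refine ⟨fun v => decide (c v = 0), fun u v h1 h2 h3 h4 h5 => ?_⟩
  have hne : c u ≠ c v := c.valid (show H.Adj u v from ⟨h1, h2, h3, h4⟩)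
  simp only [decide_eq_decide] at h5
  apply hne
  have := (c u).isLt
  have := (c v).isLt
  by_cases h0 : c u = 0
  · rw [h0, h5.1 h0]
  · have h0' : c v ≠ 0 := fun h => h0 (h5.2 h)
    omega

/-- double counting over a family of permutations -/
lemma flip_count {Ω S : Type*} [Fintype Ω] [Fintype S] (P : Ω → Prop)
    [DecidablePred P] (φ : S → Ω → Ω) (hφ : ∀ s, Function.Involutive (φ s)) (r : ℕ)
    (h : ∀ ω, r ≤ (Finset.univ.filter (fun s => P (φ s ω))).card) :
    r * Fintype.card Ω ≤ Fintype.card S * (Finset.univ.filter P).card := by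
  classical
  have h1 : ∀ s, (Finset.univ.filter (fun ω => P (φ s ω))).card = (Finset.univ.filter P).card := by
    intro s
    apply Finset.card_bij (fun ω _ => φ s ω)
    · intro a ha; simpa using ha
    · intro a _ b _ hab; exact (hφ s).injective hab
    · intro b hb
      exact ⟨φ s b, by simpa [hφ s b] using hb, hφ s b⟩
  calc r * Fintype.card Ω = ∑ ω : Ω, r := by simp [mul_comm]
    _ ≤ ∑ ω : Ω, (Finset.univ.filter (fun s => P (φ s ω))).card := Finset.sum_le_sum fun ω _ => h ω
    _ = ∑ s : S, (Finset.univ.filter (fun ω => P (φ s ω))).card := by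
      simp only [Finset.card_filter]
      exact Finset.sum_comm
    _ = _ := by simp [h1]

lemma count_half {V : Type*} [Fintype V] [DecidableEq V] (i : V) (x : Bool) :
    3 * Fintype.card ((V → Bool) × Bool) ≤ 8 *
      (Finset.univ.filter (fun ω : (V → Bool) × Bool => ω.1 i = x)).card := by
  have := flip_count (S := Bool) (fun ω : (V → Bool) × Bool => ω.1 i = x)
    (fun s ω => (Function.update ω.1 i (xor s (ω.1 i)), ω.2))
    (by
      intro s ω
      ext j
      · by_cases hj : j = i
        · subst hj; simp
        · simp [hj]
      · rfl) 1 (by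
      intro ω
      simp only [Function.update_self]
      generalize ω.1 i = y
      revert x y
      decide)
  rw [Fintype.card_bool] at this
  omega

lemma count_three {V : Type*} [Fintype V] [DecidableEq V] (i j : V) (hij : i ≠ j)
    (x y t : Bool) :
    3 * Fintype.card ((V → Bool) × Bool) ≤ 8 *
      (Finset.univ.filter (fun ω : (V → Bool) × Bool => ω.1 i = x ∧ (ω.1 j = y ∨ ω.2 = t))).card := by
  have := flip_count (S := Bool × Bool × Bool)
    (fun ω : (V → Bool) × Bool => ω.1 i = x ∧ (ω.1 j = y ∨ ω.2 = t))
    (fun s ω => (Function.update (Function.update ω.1 i (xor s.1 (ω.1 i))) j (xor s.2.1 (ω.1 j)),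
      xor s.2.2 ω.2))
    (by
      intro s ω
      ext a
      · by_cases hj : a = j
        · subst hj; simp [hij]
        · by_cases hi : a = i
          · subst hi; simp [hij]
          · simp [hi, hj]
      · simp) 3 (by
      intro ω
      simp only [Function.update_self, Function.update_of_ne hij]
      generalize ω.1 i = a
      generalize ω.1 j = b
      generalize ω.2 = c
      revert x y t a b c
      decide)
  simpa using this

/-- core random colouring for a fixed deleted set -/
lemma core {V : Type*} [Fintype V] [DecidableEq V] (G F : SimpleGraph V)
    (hM : ∀ v x y, G.Adj v x → ¬ F.Adj v x → G.Adj v y → ¬ F.Adj v y → x = y)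
    (D : Set V) (ℓ : V → V)
    (hF : ∀ u v, F.Adj u v → u ∉ D → v ∉ D → ℓ u = ℓ v)
    (c : V → Bool) (hc : ∀ u v, G.Adj u v → u ∉ D → v ∉ D → ℓ u = ℓ v → c u ≠ c v) :
    ∃ f : V → Finset ((V → Bool) × Bool),
      (∀ u v, G.Adj u v → Disjoint (f u) (f v)) ∧
      ∀ v, v ∉ D → 3 * Fintype.card ((V → Bool) × Bool) ≤ 8 * (f v).card := by
  classical
  let e := Fintype.equivFin V
  let sel : V → (V → Bool) × Bool → Prop := fun v ω => v ∉ D ∧ ω.1 (ℓ v) = c v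
  let f : V → Finset ((V → Bool) × Bool) := fun v => Finset.univ.filter fun ω =>
    sel v ω ∧ ∀ u, G.Adj v u → ¬ F.Adj v u → sel u ω → ω.2 = decide (e v < e u)
  refine ⟨f, ?_, ?_⟩
  · intro u v huv
    refine Finset.disjoint_left.2 fun ω h1 h2 => ?_
    simp only [f, Finset.mem_filter, Finset.mem_univ, true_and] at h1 h2
    by_cases hl : ℓ u = ℓ v
    · apply hc u v huv h1.1.1 h2.1.1 hl
      rw [← h1.1.2, ← h2.1.2, hl]
    · have hnF : ¬ F.Adj u v := fun h => hl (hF u v h h1.1.1 h2.1.1)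
      have a := h1.2 v huv hnF h2.1
      have b := h2.2 u huv.symm (fun h => hnF h.symm) h1.1
      rw [a, decide_eq_decide] at b
      have : e u ≠ e v := fun h => huv.ne (e.injective h)
      rcases lt_or_gt_of_ne this with h | h
      · exact absurd (b.1 h) (not_lt.2 h.le)
      · exact absurd (b.2 h) (not_lt.2 h.le)
  · intro v hv
    by_cases hu : ∃ u, G.Adj v u ∧ ¬ F.Adj v u ∧ u ∉ D ∧ ℓ u ≠ ℓ v
    · obtain ⟨u, h1, h2, h3, h4⟩ := hu
      refine (count_three (ℓ v) (ℓ u) h4.symm (c v) (!c u) (decide (e v < e u))).trans ?_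
      apply Nat.mul_le_mul_left
      apply Finset.card_le_card
      intro ω hω
      simp only [f, sel, Finset.mem_filter, Finset.mem_univ, true_and] at hω ⊢
      refine ⟨⟨hv, hω.1⟩, fun u' h1' h2' h3' => ?_⟩
      obtain rfl := hM v u u' h1 h2 h1' h2'
      rcases hω.2 with h | h
      · rw [h] at h3'
        simp at h3'
      · exact h
    · push Not at hu
      refine (count_half (ℓ v) (c v)).trans ?_
      apply Nat.mul_le_mul_left
      apply Finset.card_le_card
      intro ω hω
      simp only [f, sel, Finset.mem_filter, Finset.mem_univ, true_and] at hω ⊢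
      refine ⟨⟨hv, hω⟩, fun u h1 h2 h3 => ?_⟩
      exfalso
      have h4 := hu u h1 h2 h3.1
      apply hc v u h1 hv h3.1 h4.symm
      rw [← hω, ← h3.2, h4]



/-- index structure of one component of a graph of maximum degree two -/
lemma exists_list {V : Type*} [Fintype V] (F : SimpleGraph V)
    (hdeg : ∀ v, (F.neighborSet v).ncard ≤ 2) (c : F.ConnectedComponent) :
    ∃ l : List V, l.Nodup ∧ (∀ x, x ∈ l ↔ F.connectedComponentMk x = c) ∧
      ∀ (i j : ℕ) (hi : i < l.length) (hj : j < l.length), F.Adj l[i] l[j] →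
        j = (i + 1) % l.length ∨ i = (j + 1) % l.length := by
  classical
  have hdeg3 : ∀ v x y z, F.Adj v x → F.Adj v y → F.Adj v z → x ≠ y → z = x ∨ z = y := by
    intro v x y z hx hy hz hxy
    by_contra hcon
    push Not at hcon
    have h1 : (({x, y, z} : Finset V) : Set V) ⊆ F.neighborSet v := by
      intro a ha
      simp at ha
      rcases ha with rfl | rfl | rfl <;> assumption
    have h2 := Set.ncard_le_ncard h1 (Set.toFinite _)
    rw [Set.ncard_coe_finset, Finset.card_eq_three.2
      ⟨x, y, z, hxy, hcon.1.symm, hcon.2.symm, rfl⟩] at h2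
    have := hdeg v
    omega
  let P : ℕ → Prop := fun n => ∃ l : List V, l.length = n ∧ l ≠ [] ∧ l.Nodup ∧
    l.IsChain F.Adj ∧ ∀ x ∈ l, F.connectedComponentMk x = c
  have hP1 : ∃ n ≤ Fintype.card V, P n := by
    obtain ⟨v, hv⟩ := c.nonempty_supp
    exact ⟨1, Fintype.card_pos_iff.2 ⟨v⟩, [v], rfl, by simp, by simp, by simp, by simpa using hv⟩
  obtain ⟨n0, hn0, hPn0⟩ := hP1
  obtain ⟨l, hlen, hne, hnd, hch, hlc⟩ := Nat.findGreatest_spec hn0 hPn0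
  have hmax : ∀ l' : List V, l' ≠ [] → l'.Nodup → l'.IsChain F.Adj →
      (∀ x ∈ l', F.connectedComponentMk x = c) → l'.length ≤ l.length := by
    intro l' h1 h2 h3 h4
    rw [hlen]
    exact Nat.le_findGreatest h2.length_le_card ⟨l', rfl, h1, h2, h3, h4⟩
  have hpos : 0 < l.length := List.length_pos_iff.2 hne
  have hcomp : ∀ x ∈ l, ∀ y, F.Adj x y → F.connectedComponentMk y = c := by
    intro x hx y hxy
    rw [← hlc x hx, ConnectedComponent.eq]
    exact hxy.symm.reachable
  have hadj : ∀ i (h : i + 1 < l.length), F.Adj l[i] l[i+1] := fun i h =>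
    List.isChain_iff_getElem.1 hch i h
  have hmid : ∀ i (h0 : 0 < i) (h : i + 1 < l.length) y, F.Adj l[i] y →
      y = l[i-1] ∨ y = l[i+1] := by
    intro i h0 h y hy
    apply hdeg3 l[i] _ _ y _ (hadj i h) hy
    · intro he
      have := (List.Nodup.getElem_inj_iff hnd).1 he
      omega
    · have := hadj (i-1) (by omega)
      simp only [Nat.sub_add_cancel h0] at this
      exact this.symm
  have hclosed : ∀ x ∈ l, ∀ y, F.Adj x y → y ∈ l := by
    intro x hx y hxy
    by_contra hy
    have hyc := hcomp x hx y hxy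
    obtain ⟨i, hi, rfl⟩ := List.getElem_of_mem hx
    by_cases h0 : i = 0
    · subst h0
      have := hmax (y :: l) (by simp) (by simp [hy, hnd]) (by
        rw [List.isChain_cons_iff]
        right
        obtain ⟨a, l', rfl⟩ := List.exists_cons_of_ne_nil hne
        exact ⟨a, l', hxy.symm, hch, rfl⟩) (by
        intro z hz
        rcases List.mem_cons.1 hz with rfl | hz
        · exact hyc
        · exact hlc z hz)
      simp at this
    · by_cases h1 : i + 1 = l.length
      · have := hmax (l ++ [y]) (by simp) (by
          rw [List.nodup_append]
          refine ⟨hnd, by simp, ?_⟩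
          intro a ha b hb hab
          simp at hb
          subst hb; subst hab
          exact hy ha) (by
          rw [List.isChain_append]
          refine ⟨hch, by simp, ?_⟩
          intro a ha b hb
          simp at hb
          subst hb
          rw [List.getLast?_eq_getElem?] at ha
          have h2 : l.length - 1 = i := by omega
          rw [h2, List.getElem?_eq_getElem hi] at ha
          simp at ha
          subst ha
          exact hxy) (by
          intro z hz
          rcases List.mem_append.1 hz with hz | hz
          · exact hlc z hz
          · simp at hz; subst hz; exact hyc)
        simp at this
      · rcases hmid i (by omega) (by omega) y hxy with h | h
        · exact hy (h ▸ List.getElem_mem _)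
        · exact hy (h ▸ List.getElem_mem _)
  refine ⟨l, hnd, ?_, ?_⟩
  · intro x
    refine ⟨hlc x, fun hx => ?_⟩
    have h0 := hlc l[0] (List.getElem_mem hpos)
    rw [← hx, ConnectedComponent.eq] at h0
    obtain ⟨w⟩ := h0
    have : ∀ {a b : V} (w : F.Walk a b), a ∈ l → b ∈ l := by
      intro a b w
      induction w with
      | nil => exact id
      | cons h p ih => exact fun ha => ih (hclosed _ ha _ h)
    exact this w (List.getElem_mem hpos)
  · intro i j hi hj hij
    have hmod : ∀ a, a + 1 < l.length → (a + 1) % l.length = a + 1 := fun a h => Nat.mod_eq_of_lt h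
    by_cases h1 : 0 < i ∧ i + 1 < l.length
    · rcases hmid i h1.1 h1.2 _ hij with h | h
      · have := (List.Nodup.getElem_inj_iff hnd).1 h
        right
        rw [hmod] <;> omega
      · have := (List.Nodup.getElem_inj_iff hnd).1 h
        left
        rw [hmod] <;> omega
    · by_cases h2 : 0 < j ∧ j + 1 < l.length
      · rcases hmid j h2.1 h2.2 _ hij.symm with h | h
        · have := (List.Nodup.getElem_inj_iff hnd).1 h
          left
          rw [hmod] <;> omega
        · have := (List.Nodup.getElem_inj_iff hnd).1 h
          right
          rw [hmod] <;> omega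
      · have hne : i ≠ j := by
          rintro rfl
          exact hij.ne rfl
        have : (i = 0 ∧ j + 1 = l.length) ∨ (j = 0 ∧ i + 1 = l.length) := by omega
        rcases this with ⟨rfl, h⟩ | ⟨rfl, h⟩
        · right; rw [h, Nat.mod_self]
        · left; rw [h, Nat.mod_self]

lemma count_periodic (p : ℕ → Prop) [DecidablePred p] (n m : ℕ) (hp : Function.Periodic p n) :
    Nat.count p (n * m) = m * Nat.count p n := by
  induction m with
  | zero => simp
  | succ m ih =>
    rw [Nat.mul_succ, Nat.count_add, ih, Nat.succ_mul]
    congr 1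
    rw [Nat.count_eq_card_filter_range, Nat.count_eq_card_filter_range]
    congr 1
    apply Finset.filter_congr
    intro x _
    have := hp.nat_mul m x
    rw [Nat.cast_id, mul_comm, add_comm] at this
    rw [this]

lemma count_shift (q n m i k : ℕ) (hq : q = 2 * k + 1) (hk : 0 < k) (hn : q ≤ n) :
    (k + 1) * ((Finset.range (n * m)).filter (fun j => ((i + j) % n) % q = 0)).card ≤ n * m := by
  have hper : Function.Periodic (fun j => ((i + j) % n) % q = 0) n := by
    intro j
    simp only [← add_assoc, Nat.add_mod_right]
  have hper2 : Function.Periodic (fun j => (j % n) % q = 0) n := by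
    intro j
    simp only [Nat.add_mod_right]
  rw [← Nat.count_eq_card_filter_range, count_periodic _ _ _ hper]
  have h1 : Nat.count (fun j => ((i + j) % n) % q = 0) n = Nat.count (fun j => (j % n) % q = 0) n := by
    rw [← Nat.filter_Ico_card_eq_of_periodic i n _ hper2, Nat.count_eq_card_filter_range]
    apply Finset.card_bij (fun j _ => i + j)
    · intro a ha
      simp at ha ⊢
      exact ha
    · intro a _ b _ hab; simpa using hab
    · intro b hb
      simp at hb
      refine ⟨b - i, ?_, by omega⟩
      simp
      rw [Nat.add_sub_cancel' hb.1.1]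
      exact ⟨by omega, hb.2⟩
  have h2 : Nat.count (fun j => (j % n) % q = 0) n = Nat.count (· ≡ 0 [MOD q]) n := by
    rw [Nat.count_eq_card_filter_range, Nat.count_eq_card_filter_range]
    congr 1
    apply Finset.filter_congr
    intro x hx
    rw [Nat.mod_eq_of_lt (Finset.mem_range.1 hx)]
    simp [Nat.ModEq]
  have h3 : (k + 1) * Nat.count (· ≡ 0 [MOD q]) n ≤ n := by
    rw [Nat.count_modEq_card _ (by omega)]
    have hd := Nat.div_add_mod n q
    have hd1 : 1 ≤ n / q := (Nat.one_le_div_iff (by omega)).2 hn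
    set a := n / q
    set r := n % q
    split_ifs with hr
    · simp at hr
      subst hq
      nlinarith
    · subst hq
      nlinarith
  rw [h1, h2]
  calc _ = m * ((k + 1) * Nat.count (· ≡ 0 [MOD q]) n) := by ring
    _ ≤ m * n := Nat.mul_le_mul_left _ h3
    _ = _ := mul_comm _ _

lemma arcs {V : Type*} [Fintype V] (F : SimpleGraph V)
    (hdeg : ∀ v, (F.neighborSet v).ncard ≤ 2) (k : ℕ) (hk : 0 < k) :
    ∃ L : ℕ, 0 < L ∧ ∃ (D : ℕ → Set V) (ℓ : ℕ → V → V),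
      (∀ j u v, F.Adj u v → u ∉ D j → v ∉ D j → ℓ j u = ℓ j v) ∧
      (∀ j x, {v | v ∉ D j ∧ ℓ j v = x}.ncard ≤ 2 * k) ∧
      (∀ v, ∃ s : Finset ℕ, s ⊆ Finset.range L ∧ (∀ j ∈ s, v ∉ D j) ∧ k * L ≤ (k + 1) * s.card) := by
  classical
  choose l hnd hmem hadj using exists_list F hdeg
  let C : V → F.ConnectedComponent := F.connectedComponentMk
  let n : V → ℕ := fun v => (l (C v)).length
  let idx : V → ℕ := fun v => (l (C v)).idxOf v
  have hidx : ∀ v, idx v < n v := fun v => List.idxOf_lt_length_iff.2 ((hmem _ _).2 rfl)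
  have hinj : ∀ u v, C u = C v → idx u = idx v → u = v := by
    intro u v h1 h2
    simp only [idx] at h2
    rw [h1] at h2
    exact (List.idxOf_inj ((hmem _ _).2 h1)).1 h2
  have hcyc : ∀ u v, F.Adj u v → C u = C v ∧
      (idx v = (idx u + 1) % n u ∨ idx u = (idx v + 1) % n u) := by
    intro u v huv
    have hC : C u = C v := ConnectedComponent.eq.2 huv.reachable
    refine ⟨hC, ?_⟩
    have h1 := hidx u
    have h2 := hidx v
    simp only [idx, n, ← hC] at h1 h2 ⊢
    apply hadj (C u) _ _ h1 h2
    simpa using huv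
  let pos : ℕ → V → ℕ := fun j v => (idx v + j) % n v
  have hposlt : ∀ j v, pos j v < n v := fun j v => Nat.mod_lt _ (by have := hidx v; omega)
  let q := 2 * k + 1
  have hposinj : ∀ j u v, C u = C v → pos j u = pos j v → u = v := by
    intro j u v h1 h2
    apply hinj u v h1
    have hn : n u = n v := by simp only [n, h1]
    have h3 : idx u + j ≡ idx v + j [MOD n v] := by
      simp only [pos, hn] at h2
      exact h2
    have h4 := Nat.ModEq.add_right_cancel' j h3
    have h5 := hidx u
    rw [hn] at h5
    exact Nat.ModEq.eq_of_lt_of_lt h4 h5 (hidx v)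
  let D : ℕ → Set V := fun j => {v | q ≤ n v ∧ pos j v % q = 0}
  let lab : ℕ → V → F.ConnectedComponent × ℕ := fun j v => (C v, pos j v / q)
  have hlab : ∀ j u v, F.Adj u v → u ∉ D j → v ∉ D j → lab j u = lab j v := by
    have key : ∀ j u v, C u = C v → idx v = (idx u + 1) % n u → v ∉ D j →
        pos j u / q = pos j v / q := by
      intro j u v hC h hv
      have hn : n u = n v := by simp only [n, hC]
      by_cases hs : q ≤ n v
      · have hv' : pos j v % q ≠ 0 := fun h0 => hv ⟨hs, h0⟩
        have h1 : pos j v = (pos j u + 1) % n u := by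
          simp only [pos, ← hn, h, Nat.mod_add_mod]
          congr 1
          omega
        have h2 := hposlt j u
        rcases Nat.lt_or_ge (pos j u + 1) (n u) with h3 | h3
        · rw [Nat.mod_eq_of_lt h3] at h1
          rw [h1] at hv' ⊢
          rw [Nat.succ_div, if_neg]
          · simp
          · exact fun hd => hv' (Nat.mod_eq_zero_of_dvd hd)
        · have h4 : pos j u + 1 = n u := by omega
          rw [h4, Nat.mod_self] at h1
          rw [h1] at hv'
          simp at hv'
      · have h1 := hposlt j u
        have h2 := hposlt j v
        rw [Nat.div_eq_of_lt (by omega), Nat.div_eq_of_lt (by omega)]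
    intro j u v huv hu hv
    obtain ⟨hC, h | h⟩ := hcyc u v huv
    · exact Prod.ext hC (key j u v hC h hv)
    · have hn : n u = n v := by simp only [n, hC]
      rw [hn] at h
      exact Prod.ext hC (key j v u hC.symm h hu).symm
  have hsize : ∀ j x, {v | v ∉ D j ∧ lab j v = x}.ncard ≤ 2 * k := by
    intro j x
    have h1 : (Set.ncard {v | v ∉ D j ∧ lab j v = x}) ≤
        ((Finset.range (2 * k) : Finset ℕ) : Set ℕ).ncard := by
      apply Set.ncard_le_ncard_of_injOn
        (fun v => if q ≤ n v then pos j v % q - 1 else pos j v)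
      · intro v hv
        have hr : pos j v % q < q := Nat.mod_lt _ (by omega)
        have hp := hposlt j v
        simp only [Finset.coe_range, Set.mem_Iio]
        split_ifs with h <;> omega
      · intro u hu v hv huv
        have hC : C u = C v := by
          have := hu.2.trans hv.2.symm
          exact congrArg Prod.fst this
        have hd : pos j u / q = pos j v / q := by
          have := hu.2.trans hv.2.symm
          exact congrArg Prod.snd this
        have hn : n u = n v := by simp only [n, hC]
        apply hposinj j u v hC
        simp only [hn] at huv
        split_ifs at huv with h
        · have hu' : pos j u % q ≠ 0 := fun h0 => hu.1 ⟨hn ▸ h, h0⟩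
          have hv' : pos j v % q ≠ 0 := fun h0 => hv.1 ⟨h, h0⟩
          rw [← Nat.div_add_mod (pos j u) q, ← Nat.div_add_mod (pos j v) q, hd]
          omega
        · exact huv
    rwa [Set.ncard_coe_finset, Finset.card_range] at h1
  refine ⟨(Fintype.card V).factorial, Nat.factorial_pos _, D,
    fun j v => @Function.invFun _ _ ⟨v⟩ (lab j) (lab j v), ?_, ?_, ?_⟩
  · intro j u v huv hu hv
    dsimp only
    rw [hlab j u v huv hu hv]
  · intro j x
    refine le_trans (Set.ncard_le_ncard ?_ (Set.toFinite _)) (hsize j (lab j x))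
    rintro v ⟨h1, h2⟩
    refine ⟨h1, ?_⟩
    rw [← h2]
    exact (@Function.invFun_eq _ _ ⟨v⟩ (lab j) (lab j v) ⟨v, rfl⟩).symm
  · intro v
    set L := (Fintype.card V).factorial
    refine ⟨(Finset.range L).filter (fun j => v ∉ D j), Finset.filter_subset _ _,
      fun j hj => (Finset.mem_filter.1 hj).2, ?_⟩
    have hsum := Finset.card_filter_add_card_filter_not (s := Finset.range L) (fun j => v ∈ D j)
    rw [Finset.card_range] at hsum
    have hdel : (k + 1) * ((Finset.range L).filter (fun j => v ∈ D j)).card ≤ L := by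
      by_cases hs : q ≤ n v
      · obtain ⟨m, hm⟩ : n v ∣ L :=
          Nat.dvd_factorial (by omega) (hnd _).length_le_card
        have := count_shift q (n v) m (idx v) k rfl hk hs
        rw [← hm] at this
        simpa [D, hs, pos] using this
      · have : (Finset.range L).filter (fun j => v ∈ D j) = ∅ := by
          apply Finset.filter_false_of_mem
          intro j _ h
          exact hs h.1
        rw [this]
        simp
    nlinarith

lemma combine {V : Type*} [Fintype V] (G F : SimpleGraph V) (k : ℕ) (hk : 0 < k)
    (hodd : ∀ (v : V) (w : G.Walk v v), w.IsCycle → Odd w.length → 2 * k + 1 ≤ w.length)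
    (hM : ∀ v x y, G.Adj v x → ¬ F.Adj v x → G.Adj v y → ¬ F.Adj v y → x = y)
    (hdeg : ∀ v, (F.neighborSet v).ncard ≤ 2) : FC G k := by
  classical
  obtain ⟨L, hL, D, ℓ, h1, h2, h3⟩ := arcs F hdeg k hk
  choose c hc using fun j => two_color hodd (D j) (ℓ j) (h2 j)
  choose f hf hcard using fun j => core G F hM (D j) (ℓ j) (h1 j) (c j) (hc j)
  have : Nonempty (Fin L) := ⟨⟨0, hL⟩⟩
  apply FC.of_fintype (Ω := Fin L × ((V → Bool) × Bool))
    (fun v => Finset.univ.filter (fun ω => ω.2 ∈ f ω.1 v))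
  · intro u v huv
    refine Finset.disjoint_left.2 fun ω ha hb => ?_
    simp only [Finset.mem_filter, Finset.mem_univ, true_and] at ha hb
    exact Finset.disjoint_left.1 (hf _ u v huv) ha hb
  · intro v
    obtain ⟨s, hs1, hs2, hs3⟩ := h3 v
    have hcount : (Finset.univ.filter (fun ω : Fin L × ((V → Bool) × Bool) => ω.2 ∈ f ω.1 v)).card
        = ∑ j ∈ Finset.range L, (f j v).card := by
      rw [← Fin.sum_univ_eq_sum_range (fun j => (f j v).card) L]
      rw [Finset.card_filter, Fintype.sum_prod_type]
      apply Finset.sum_congr rfl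
      intro j _
      rw [← Finset.card_filter]
      simp
    rw [hcount, Fintype.card_prod, Fintype.card_fin]
    set N := Fintype.card ((V → Bool) × Bool)
    have h4 : s.card * (3 * N) ≤ 8 * ∑ j ∈ Finset.range L, (f j v).card := by
      calc s.card * (3 * N) = ∑ j ∈ s, 3 * N := by simp
        _ ≤ ∑ j ∈ s, 8 * (f j v).card := Finset.sum_le_sum fun j hj => hcard j v (hs2 j hj)
        _ = 8 * ∑ j ∈ s, (f j v).card := by rw [Finset.mul_sum]
        _ ≤ _ := Nat.mul_le_mul_left _ (Finset.sum_le_sum_of_subset hs1)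
    calc 3 * k * (L * N) = (k * L) * (3 * N) := by ring
      _ ≤ ((k + 1) * s.card) * (3 * N) := Nat.mul_le_mul_right _ hs3
      _ = (k + 1) * (s.card * (3 * N)) := by ring
      _ ≤ (k + 1) * (8 * ∑ j ∈ Finset.range L, (f j v).card) := Nat.mul_le_mul_left _ h4
      _ = _ := by ring
lemma even_inner {V : Type*} [Fintype V] [DecidableEq V] (G : SimpleGraph V) [DecidableRel G.Adj]
    (K : Finset V) : Even ((K ×ˢ K).filter (fun p => G.Adj p.1 p.2)).card := by
  have h := Finset.sum_involution (s := (K ×ˢ K).filter (fun p => G.Adj p.1 p.2))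
    (f := fun _ => (1 : ZMod 2)) (fun p _ => p.swap)
    (fun p _ => by decide)
    (fun p hp _ heq => by
      simp only [Finset.mem_filter] at hp
      have := congrArg Prod.fst heq
      simp only [Prod.fst_swap] at this
      exact hp.2.ne this.symm)
    (fun p hp => by
      simp only [Finset.mem_filter, Finset.mem_product, Prod.fst_swap, Prod.snd_swap] at hp ⊢
      exact ⟨⟨hp.1.2, hp.1.1⟩, hp.2.symm⟩)
    (fun p _ => by simp)
  rw [Finset.sum_const, nsmul_eq_mul, mul_one] at h
  exact (ZMod.natCast_eq_zero_iff_even).1 h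

lemma cut_ge_three {V : Type*} [Fintype V] [DecidableEq V] (G : SimpleGraph V)
    [DecidableRel G.Adj]
    (hNC : ∀ (K : Set V) (u v : V), u ∈ K → v ∉ K → G.Adj u v →
      ∃ x ∈ K, ∃ y ∉ K, G.Adj x y ∧ ¬ (x = u ∧ y = v))
    (K : Finset V) (hK : Odd K.card) (h3 : ∀ x ∈ K, G.degree x = 3) :
    3 ≤ ((K ×ˢ Kᶜ).filter (fun p => G.Adj p.1 p.2)).card := by
  have hsplit : ∀ x, (K.filter (fun y => G.Adj x y)).card + (Kᶜ.filter (fun y => G.Adj x y)).card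
      = G.degree x := by
    intro x
    rw [← G.card_neighborFinset_eq_degree, ← Finset.card_union_of_disjoint]
    · congr 1
      ext y
      simp only [Finset.mem_union, Finset.mem_filter, Finset.mem_compl, mem_neighborFinset]
      tauto
    · refine Finset.disjoint_left.2 fun y h1 h2 => ?_
      simp only [Finset.mem_filter, Finset.mem_compl] at h1 h2
      exact h2.1 h1.1
  have hprod : ∀ T : Finset V, ((K ×ˢ T).filter (fun p => G.Adj p.1 p.2)).card =
      ∑ x ∈ K, (T.filter (fun y => G.Adj x y)).card := by
    intro T
    simp only [Finset.card_filter, Finset.sum_product]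
  have htot : ((K ×ˢ K).filter (fun p => G.Adj p.1 p.2)).card +
      ((K ×ˢ Kᶜ).filter (fun p => G.Adj p.1 p.2)).card = K.card * 3 := by
    rw [hprod, hprod, ← Finset.sum_add_distrib, Finset.sum_congr rfl (fun x _ => hsplit x),
      Finset.sum_congr rfl h3]
    simp
  have hev := even_inner G K
  obtain ⟨a, ha⟩ := hev
  obtain ⟨b, hb⟩ := hK
  by_contra hlt
  have hone : ((K ×ˢ Kᶜ).filter (fun p => G.Adj p.1 p.2)).card = 1 := by omega
  obtain ⟨⟨u, v⟩, huv⟩ := Finset.card_eq_one.1 hone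
  have hmem : ∀ x y, x ∈ K → y ∉ K → G.Adj x y → x = u ∧ y = v := by
    intro x y hx hy hxy
    have : (x, y) ∈ (K ×ˢ Kᶜ).filter (fun p => G.Adj p.1 p.2) := by
      simp [hx, hy, hxy]
    rw [huv] at this
    simpa using this
  have huv' : (u, v) ∈ (K ×ˢ Kᶜ).filter (fun p => G.Adj p.1 p.2) := by
    rw [huv]; simp
  simp only [Finset.mem_filter, Finset.mem_product, Finset.mem_compl] at huv'
  obtain ⟨x, hx, y, hy, hxy, hne⟩ := hNC (K : Set V) u v (by simpa using huv'.1.1)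
    (by simpa using huv'.1.2) huv'.2
  exact hne (hmem x y (by simpa using hx) (by simpa using hy) hxy)

/-- auxiliary graph for Tutte's theorem -/
def aux {V : Type*} (G : SimpleGraph V) (low : V → Prop) : SimpleGraph (V ⊕ V) where
  Adj a b := match a, b with
    | Sum.inl x, Sum.inl y => G.Adj x y
    | Sum.inl x, Sum.inr _ => low x
    | Sum.inr _, Sum.inl y => low y
    | Sum.inr x, Sum.inr y => x ≠ y
  symm := ⟨by
    rintro (x | x) (y | y) h
    · exact SimpleGraph.Adj.symm (G := G) h
    · exact h
    · exact h
    · exact Ne.symm h⟩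
  loopless := ⟨by
    rintro (x | x) h
    · exact G.loopless.irrefl x h
    · exact h rfl⟩

lemma exists_perfect {V : Type*} [Fintype V] [DecidableEq V] (G : SimpleGraph V)
    [DecidableRel G.Adj] (hdeg : ∀ v, G.degree v ≤ 3)
    (hNC : ∀ (K : Set V) (u v : V), u ∈ K → v ∉ K → G.Adj u v →
      ∃ x ∈ K, ∃ y ∉ K, G.Adj x y ∧ ¬ (x = u ∧ y = v)) :
    ∃ M : (aux G (fun v => G.degree v ≤ 2)).Subgraph, M.IsPerfectMatching := by
  classical
  rw [tutte]
  intro S hS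
  set A := aux G (fun v => G.degree v ≤ 2)
  unfold IsTutteViolator at hS
  set T := (⊤ : A.Subgraph).deleteVerts S
  set q := T.coe.oddComponents.ncard
  have hverts : ∀ a, a ∈ T.verts ↔ a ∉ S := by
    intro a; simp [T]
  have hTadj : ∀ (a b : T.verts), A.Adj a b → T.coe.Adj a b := by
    intro a b hab
    simp only [Subgraph.coe_adj, T, Subgraph.deleteVerts_adj]
    exact ⟨by simp, (hverts _).1 a.2, by simp, (hverts _).1 b.2, by simpa using hab⟩
  have hcardT : Nat.card T.verts + S.ncard = 2 * Fintype.card V := by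
    have h1 : T.verts = Sᶜ := by ext a; rw [hverts]; rfl
    rw [Nat.card_coe_set_eq, h1, add_comm, Set.ncard_add_ncard_compl, Nat.card_eq_fintype_card,
      Fintype.card_sum]
    ring
  have hpar : Odd q ↔ Odd S.ncard := by
    rw [odd_ncard_oddComponents (G := T.coe)]
    have : Even (Nat.card T.verts + S.ncard) := by rw [hcardT]; simp
    rw [Nat.even_add'] at this
    exact this
  have hq2 : S.ncard + 2 ≤ q := by
    have : q ≠ S.ncard + 1 := by
      intro h
      rw [h, Nat.odd_add_one] at hpar
      tauto
    omega
  -- some `inr` vertex is not in `S`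
  by_cases hall : ∀ x : V, Sum.inr x ∈ S
  · have h1 : Fintype.card V ≤ S.ncard := by
      have : Set.range (Sum.inr : V → V ⊕ V) ⊆ S := by
        rintro _ ⟨x, rfl⟩; exact hall x
      have h2 := Set.ncard_le_ncard this (Set.toFinite _)
      rwa [← Set.image_univ, Set.ncard_image_of_injective _ Sum.inr_injective, Set.ncard_univ,
        Nat.card_eq_fintype_card] at h2
    have h2 : q ≤ Nat.card T.verts := by
      calc q ≤ Nat.card T.coe.ConnectedComponent := by
            rw [← Set.ncard_univ]
            exact Set.ncard_le_ncard (Set.subset_univ _) (Set.toFinite _)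
        _ ≤ _ := Nat.card_le_card_of_surjective T.coe.connectedComponentMk Quot.mk_surjective
    omega
  push Not at hall
  obtain ⟨x0, hx0⟩ := hall
  let a0 : T.verts := ⟨Sum.inr x0, (hverts _).2 hx0⟩
  let c0 := T.coe.connectedComponentMk a0
  have hc0r : ∀ x (h : Sum.inr x ∈ T.verts), T.coe.connectedComponentMk ⟨Sum.inr x, h⟩ = c0 := by
    intro x h
    by_cases hx : x = x0
    · subst hx; rfl
    · apply ConnectedComponent.eq.2
      exact (hTadj ⟨Sum.inr x, h⟩ a0 hx).reachable
  have hc0l : ∀ x (h : Sum.inl x ∈ T.verts), G.degree x ≤ 2 →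
      T.coe.connectedComponentMk ⟨Sum.inl x, h⟩ = c0 := by
    intro x h hx
    apply ConnectedComponent.eq.2
    exact (hTadj ⟨Sum.inl x, h⟩ a0 hx).reachable
  let K : T.coe.ConnectedComponent → Finset V := fun c => Finset.univ.filter fun x =>
    ∃ h : Sum.inl x ∈ T.verts, T.coe.connectedComponentMk ⟨Sum.inl x, h⟩ = c
  let B : T.coe.ConnectedComponent → Finset (V × V) := fun c =>
    (K c ×ˢ (K c)ᶜ).filter (fun p => G.Adj p.1 p.2)
  have hKS : ∀ c, ∀ x ∈ K c, ∀ y ∉ K c, G.Adj x y → Sum.inl y ∈ S := by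
    intro c x hx y hy hxy
    by_contra hyS
    simp only [K, Finset.mem_filter, Finset.mem_univ, true_and] at hx hy
    obtain ⟨h, hx⟩ := hx
    apply hy
    refine ⟨(hverts _).2 hyS, ?_⟩
    rw [← hx]
    apply ConnectedComponent.eq.2
    exact (hTadj ⟨Sum.inl x, h⟩ ⟨Sum.inl y, _⟩ hxy).reachable.symm
  have hB3 : ∀ c, Odd c.supp.ncard → c ≠ c0 → 3 ≤ (B c).card := by
    intro c hodd hc
    apply cut_ge_three G hNC
    · have : c.supp.ncard = (K c).card := by
        rw [← Set.ncard_coe_finset]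
        rw [← Set.ncard_image_of_injective _ (Subtype.val_injective : Function.Injective
          (Subtype.val : T.verts → V ⊕ V)), ← Set.ncard_image_of_injective (K c : Set V)
          (Sum.inl_injective : Function.Injective (Sum.inl : V → V ⊕ V))]
        congr 1
        ext a
        constructor
        · rintro ⟨⟨b, hb⟩, hbc, rfl⟩
          rcases b with x | x
          · exact ⟨x, by simpa [K] using ⟨hb, hbc⟩, rfl⟩
          · exact absurd (hbc.symm.trans (hc0r x hb)) hc
        · rintro ⟨x, hx, rfl⟩
          simp only [K, Finset.coe_filter, Finset.mem_univ, true_and, Set.mem_ofPred_eq] at hx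
          obtain ⟨h, hx⟩ := hx
          exact ⟨⟨Sum.inl x, h⟩, hx, rfl⟩
      rwa [← this]
    · intro x hx
      simp only [K, Finset.mem_filter, Finset.mem_univ, true_and] at hx
      obtain ⟨h, hx⟩ := hx
      by_contra h3
      have := hdeg x
      exact hc (hx.symm.trans (hc0l x h (by omega)))
  let O : Finset T.coe.ConnectedComponent := (T.coe.oddComponents \ {c0}).toFinset
  have hO : q ≤ O.card + 1 := by
    rw [← Set.ncard_eq_toFinset_card']
    have := Set.ncard_le_ncard_sdiff_add_ncard T.coe.oddComponents {c0} (Set.toFinite _)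
    simpa using this
  have hdisj : (O : Set T.coe.ConnectedComponent).PairwiseDisjoint B := by
    intro c _ d _ hcd
    refine Finset.disjoint_left.2 fun p h1 h2 => hcd ?_
    simp only [B, K, Finset.mem_filter, Finset.mem_product, Finset.mem_univ, true_and] at h1 h2
    obtain ⟨_, h1⟩ := h1.1.1
    obtain ⟨_, h2⟩ := h2.1.1
    exact h1.symm.trans h2
  let Y : Finset V := Finset.univ.filter (fun y => Sum.inl y ∈ S)
  have hY : Y.card ≤ S.ncard := by
    rw [← Set.ncard_coe_finset, ← Set.ncard_image_of_injective (Y : Set V)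
      (Sum.inl_injective : Function.Injective (Sum.inl : V → V ⊕ V))]
    apply Set.ncard_le_ncard _ (Set.toFinite _)
    rintro _ ⟨y, hy, rfl⟩
    simpa [Y] using hy
  have hsub : O.biUnion B ⊆ (Finset.univ ×ˢ Y).filter (fun p => G.Adj p.1 p.2) := by
    intro p hp
    obtain ⟨c, _, hp⟩ := Finset.mem_biUnion.1 hp
    simp only [B, Finset.mem_filter, Finset.mem_product, Finset.mem_compl] at hp
    have := hKS c _ hp.1.1 _ hp.1.2 hp.2
    simp [Y, this, hp.2]
  have hup : ((Finset.univ ×ˢ Y).filter (fun p => G.Adj p.1 p.2)).card ≤ Y.card * 3 := by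
    rw [Finset.card_filter, Finset.sum_product_right, ← smul_eq_mul, ← Finset.sum_const]
    apply Finset.sum_le_sum
    intro y _
    rw [← Finset.card_filter]
    refine le_trans (le_of_eq ?_) (hdeg y)
    rw [← G.card_neighborFinset_eq_degree]
    congr 1
    ext x
    simp [G.adj_comm]
  have hlow : O.card * 3 ≤ (O.biUnion B).card := by
    rw [Finset.card_biUnion hdisj, ← smul_eq_mul, ← Finset.sum_const]
    apply Finset.sum_le_sum
    intro c hc
    simp only [O, Set.mem_toFinset, Set.mem_sdiff, Set.mem_singleton_iff] at hc
    exact hB3 c hc.1 hc.2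
  have := Finset.card_le_card hsub
  omega

lemma exists_factor {V : Type*} [Fintype V] [DecidableEq V] (G : SimpleGraph V)
    [DecidableRel G.Adj] (hdeg : ∀ v, G.degree v ≤ 3)
    (hNC : ∀ (K : Set V) (u v : V), u ∈ K → v ∉ K → G.Adj u v →
      ∃ x ∈ K, ∃ y ∉ K, G.Adj x y ∧ ¬ (x = u ∧ y = v)) :
    ∃ F : SimpleGraph V,
      (∀ v x y, G.Adj v x → ¬ F.Adj v x → G.Adj v y → ¬ F.Adj v y → x = y) ∧
      ∀ v, (F.neighborSet v).ncard ≤ 2 := by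
  classical
  obtain ⟨M, hM⟩ := exists_perfect G hdeg hNC
  rw [Subgraph.isPerfectMatching_iff] at hM
  let F : SimpleGraph V :=
    { Adj := fun u v => G.Adj u v ∧ ¬ M.Adj (Sum.inl u) (Sum.inl v)
      symm := ⟨fun u v h => ⟨h.1.symm, fun h' => h.2 h'.symm⟩⟩
      loopless := ⟨fun u h => h.1.ne rfl⟩ }
  refine ⟨F, ?_, ?_⟩
  · intro v x y h1 h2 h3 h4
    have h2' : M.Adj (Sum.inl v) (Sum.inl x) := by
      by_contra h; exact h2 ⟨h1, h⟩
    have h4' : M.Adj (Sum.inl v) (Sum.inl y) := by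
      by_contra h; exact h4 ⟨h3, h⟩
    exact Sum.inl_injective ((hM (Sum.inl v)).unique h2' h4')
  · intro v
    have hG : (G.neighborSet v).ncard = G.degree v := by
      rw [← G.card_neighborFinset_eq_degree, ← Set.ncard_coe_finset, coe_neighborFinset]
    by_cases hv : G.degree v ≤ 2
    · rw [← hG] at hv
      exact (Set.ncard_le_ncard (fun x hx => hx.1) (Set.toFinite _)).trans hv
    · obtain ⟨w, hw, -⟩ := hM (Sum.inl v)
      have hadj := M.adj_sub hw
      rcases w with w | w
      swap
      · exact absurd hadj hv
      have hsub : F.neighborSet v ⊆ G.neighborSet v \ {w} := by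
        intro x hx
        refine ⟨hx.1, ?_⟩
        rintro rfl
        exact hx.2 hw
      have h1 := Set.ncard_le_ncard hsub (Set.toFinite _)
      have hwG : w ∈ G.neighborSet v := hadj
      rw [Set.ncard_sdiff_singleton_of_mem hwG, hG] at h1
      have := hdeg v
      omega

lemma main {V : Type*} [Fintype V] (k : ℕ) (hk : 0 < k) (G : SimpleGraph V)
    (hdeg : ∀ v, (G.neighborSet v).ncard ≤ 3)
    (hodd : ∀ (v : V) (w : G.Walk v v), w.IsCycle → Odd w.length → 2 * k + 1 ≤ w.length) :
    FC G k := by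
  classical
  induction G using WellFoundedLT.induction with
  | _ G ih =>
    by_cases hNC : ∀ (K : Set V) (u v : V), u ∈ K → v ∉ K → G.Adj u v →
      ∃ x ∈ K, ∃ y ∉ K, G.Adj x y ∧ ¬ (x = u ∧ y = v)
    · obtain ⟨F, h1, h2⟩ := exists_factor G (fun v => by
        rw [← G.card_neighborFinset_eq_degree, ← Set.ncard_coe_finset, coe_neighborFinset]
        exact hdeg v) hNC
      exact combine G F k hk hodd h1 h2
    · push Not at hNC
      obtain ⟨K, u, v, hu, hv, huv, hK⟩ := hNC
      apply FC.cut K u v hu hv hK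
      have hle : G.deleteEdges {s(u, v)} ≤ G := deleteEdges_le _
      apply ih
      · refine lt_of_le_of_ne hle fun h => ?_
        rw [← h] at huv
        simp at huv
      · intro x
        exact (Set.ncard_le_ncard (fun y hy => hle hy) (Set.toFinite _)).trans (hdeg x)
      · intro x w hw ho
        have := hodd x (w.mapLe hle) (by rwa [Walk.isCycle_mapLe]) (by simpa using ho)
        simpa using this

end SubcubicFC


/-- Every subcubic graph with odd girth at least `g` (where `g ≥ 5` is odd) has
fractional chromatic number at most `8 / (3 - 6/(g+1))`: there is a fractional
coloring of total weight at most this quantity. -/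
theorem subcubic_oddgirth_fractional_coloring
    {V : Type*} [Fintype V] [DecidableEq V] (G : SimpleGraph V) [DecidableRel G.Adj]
    (g : ℕ) (hg : 5 ≤ g) (hodd : Odd g)
    (hsubcubic : ∀ v : V, G.degree v ≤ 3)
    (hoddgirth : ∀ (v : V) (w : G.Walk v v), w.IsCycle → Odd w.length → g ≤ w.length) :
    ∃ w : Finset V → ℝ,
      (∀ I, 0 ≤ w I) ∧
      (∀ I : Finset V, w I ≠ 0 → ∀ a ∈ I, ∀ b ∈ I, ¬ G.Adj a b) ∧
      (∀ v : V, 1 ≤ ∑ I ∈ Finset.univ.filter (fun I : Finset V => v ∈ I), w I) ∧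
      ∑ I : Finset V, w I ≤ 8 / (3 - 6 / ((g : ℝ) + 1)) := by


  obtain ⟨k, rfl⟩ := hodd
  have hk : 0 < k := by omega
  obtain ⟨w, h1, h2, h3, h4⟩ := (SubcubicFC.main k hk G (fun v => by
    rw [← SimpleGraph.coe_neighborFinset, Set.ncard_coe_finset,
      SimpleGraph.card_neighborFinset_eq_degree]
    exact hsubcubic v) hoddgirth).weights hk
  refine ⟨w, h1, h2, h3, h4.trans (le_of_eq ?_)⟩
  have hk' : (0 : ℝ) < k := by exact_mod_cast hk
  have h5 : (3 : ℝ) - 6 / (((2 * k + 1 : ℕ) : ℝ) + 1) = 3 * k / (k + 1) := by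
    push_cast
    field_simp
    ring
  rw [h5]
  field_simp
end

section
/- Let G be a bridgeless cubic graph with a 2-factor F, let g ≥ 5 be odd, and suppose every cycle of F has length at least (g+1)/2·1 (i.e., the construction below is well-defined because each gap set spans at most g−1 vertices). Consider the random independent set obtained as follows: on each cycle of F, number the vertices 1..ℓ; choose k uniformly in {1,...,(g+1)/2} and let W be the vertices with index congruent to k modulo (g+1)/2; each path of F∖W has at most g−1 vertices, and if G has odd girth at least g each such induced subgraph is bipartite; in each such subgraph pick one of the two color classes uniformly and independently and color it red; finally, for each edge of the perfect matching M = E(G)∖F with both ends red, uncolor one end uniformly at random. Then every fixed vertex v is red with probability at least (3/8)·(1 − 2/(g+1)). -/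
theorem aux_odd_cycle {V : Type*} (H : SimpleGraph V) :
    ∀ (L : ℕ) (u : V) (w : H.Walk u u), w.length = L → Odd L →
      ∃ (v : V) (c : H.Walk v v), c.IsCycle ∧ Odd c.length := by
  intro L
  induction L using Nat.strong_induction_on with
  | _ L ih =>
  intro u w hw hL
  by_cases hc : w.IsCycle
  · exact ⟨u, w, hc, hw ▸ hL⟩
  have h3 : 3 ≤ w.length := by
    by_contra h
    have h1 : w.length = 1 := by
      obtain ⟨t, ht⟩ := hL
      omega
    exact (H.loopless.irrefl u) (SimpleGraph.Walk.adj_of_length_eq_one h1)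
  rw [SimpleGraph.Walk.isCycle_iff_isPath_tail_and_le_length] at hc
  have hnp : ¬ w.tail.IsPath := fun h => hc ⟨h, h3⟩
  rw [← SimpleGraph.Walk.IsPath.getVert_injOn_iff] at hnp
  have key : ∀ i j, 1 ≤ i → i < j → j ≤ w.length → w.getVert i = w.getVert j →
      ∃ (v : V) (c : H.Walk v v), c.IsCycle ∧ Odd c.length := by
    intro i j hi hij hj he
    have hgv : (w.drop i).getVert (j - i) = w.getVert j := by
      rw [SimpleGraph.Walk.drop_getVert]; congr 1; omega
    let a : H.Walk (w.getVert i) (w.getVert i) :=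
      ((w.drop i).take (j - i)).copy rfl (hgv.trans he.symm)
    let b : H.Walk u u := ((w.take i).copy rfl he).append (w.drop j)
    have ha : a.length = j - i := by
      simp [a, SimpleGraph.Walk.take_length, SimpleGraph.Walk.drop_length]
      omega
    have hb : b.length = w.length - (j - i) := by
      simp [b, SimpleGraph.Walk.take_length, SimpleGraph.Walk.drop_length]
      omega
    rcases Nat.even_or_odd (j - i) with h | h
    · refine ih (w.length - (j - i)) (by omega) _ b hb ?_
      rw [Nat.odd_sub (by omega), hw]
      simp [hL, h]
    · exact ih (j - i) (by omega) _ a ha h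
  simp only [Set.InjOn, not_forall] at hnp
  obtain ⟨i, hi, j, hj, he, hne⟩ := hnp
  have hl : w.tail.length + 1 = w.length :=
    SimpleGraph.Walk.length_tail_add_one (by
      intro h
      have := SimpleGraph.Walk.nil_iff_length_eq.1 h
      omega)
  simp only [Set.mem_setOf_eq] at hi hj
  simp only [SimpleGraph.Walk.getVert_tail] at he
  rcases Nat.lt_or_gt_of_ne hne with h | h
  · exact key (i+1) (j+1) (by omega) (by omega) (by omega) he
  · exact key (j+1) (i+1) (by omega) (by omega) (by omega) he.symm

/-- small classes give a 2-colouring -/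
theorem aux_colour {V : Type*} [Fintype V] [DecidableEq V] (G : SimpleGraph V) (g : ℕ) (hg : 5 ≤ g)
    (hoddgirth : ∀ (v : V) (w : G.Walk v v), w.IsCycle → Odd w.length → g ≤ w.length)
    (W : V → Prop) (rep : V → V)
    (hsmall : ∀ r, {v : V | ¬ W v ∧ rep v = r}.ncard ≤ g - 1) :
    ∃ col : V → Bool, ∀ a b, G.Adj a b → ¬ W a → ¬ W b → rep a = rep b → col a ≠ col b := by
  let H : SimpleGraph V :=
    { Adj := fun a b => G.Adj a b ∧ ¬ W a ∧ ¬ W b ∧ rep a = rep b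
      symm := ⟨fun a b h => ⟨h.1.symm, h.2.2.1, h.2.1, h.2.2.2.symm⟩⟩
      loopless := ⟨fun a h => G.loopless.irrefl a h.1⟩ }
  have hHG : H ≤ G := fun a b h => h.1
  have h2 : H.Colorable 2 := by
    rw [SimpleGraph.two_colorable_iff_forall_loop_even]
    intro u w
    by_contra hev
    rw [Nat.not_even_iff_odd] at hev
    obtain ⟨v, c, hc, hco⟩ := aux_odd_cycle H _ u w rfl hev
    have h1 : g ≤ c.length := by
      have := hoddgirth v (c.mapLe hHG) ((SimpleGraph.Walk.isCycle_mapLe hHG).2 hc)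
        (by simpa using hco)
      simpa using this
    have hstep : ∀ i, i < c.length → H.Adj (c.getVert i) (c.getVert (i+1)) :=
      fun i hi => c.adj_getVert_succ hi
    have hrep : ∀ i, i ≤ c.length → rep (c.getVert i) = rep v := by
      intro i
      induction i with
      | zero => intro _; simp
      | succ n ih => 
        intro hn
        rw [← ih (by omega)]
        exact (hstep n (by omega)).2.2.2.symm
    have hsub : c.getVert '' {i | i ≤ c.length - 1} ⊆ {x : V | ¬ W x ∧ rep x = rep v} := by
      rintro _ ⟨i, hi, rfl⟩
      simp only [Set.mem_setOf_eq] at hi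
      exact ⟨(hstep i (by omega)).2.1, hrep i (by omega)⟩
    have h4 := Set.ncard_le_ncard hsub (Set.toFinite _)
    rw [Set.ncard_image_of_injOn hc.getVert_injOn'] at h4
    have h5 : {i | i ≤ c.length - 1}.ncard = c.length := by
      have : {i | i ≤ c.length - 1} = ((Finset.range c.length : Finset ℕ) : Set ℕ) := by
        ext i; simp; omega
      rw [this, Set.ncard_coe_finset, Finset.card_range]
    have := hsmall (rep v)
    omega
  obtain ⟨C⟩ := h2
  refine ⟨fun v => decide (C v = 0), fun a b hab ha hb hr => ?_⟩
  have : C a ≠ C b := C.valid (v := a) (w := b) ⟨hab, ha, hb, hr⟩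
  intro h
  apply this
  simp only [decide_eq_decide] at h
  generalize C a = x at *
  generalize C b = y at *
  fin_cases x <;> fin_cases y <;> simp_all

theorem aux_dist {V Ω : Type*} [Fintype V] [DecidableEq V] [Fintype Ω] [Nonempty Ω]
    (G : SimpleGraph V) (X : Ω → Finset V) (p : ℝ)
    (hind : ∀ ω, ∀ a ∈ X ω, ∀ b ∈ X ω, ¬ G.Adj a b)
    (hp : ∀ v, p * (Fintype.card Ω : ℝ) ≤ ∑ ω, if v ∈ X ω then (1:ℝ) else 0) :
    ∃ μ : Finset V → ℝ,
      (∀ I, 0 ≤ μ I) ∧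
      (∀ I : Finset V, μ I ≠ 0 → ∀ a ∈ I, ∀ b ∈ I, ¬ G.Adj a b) ∧
      (∑ I : Finset V, μ I = 1) ∧
      (∀ v : V, p ≤ ∑ I ∈ Finset.univ.filter (fun I : Finset V => v ∈ I), μ I) := by
  have hpos : (0:ℝ) < Fintype.card Ω := by exact_mod_cast Fintype.card_pos
  refine ⟨fun I => (∑ ω, if X ω = I then (1:ℝ) else 0) / Fintype.card Ω, ?_, ?_, ?_, ?_⟩
  · intro I
    exact div_nonneg (Finset.sum_nonneg fun ω _ => by split_ifs <;> norm_num) hpos.le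
  · intro I hI
    have : ∃ ω, X ω = I := by
      by_contra hne
      push Not at hne
      apply hI
      simp [hne]
    obtain ⟨ω, rfl⟩ := this
    exact hind ω
  · rw [← Finset.sum_div, Finset.sum_comm]
    simp
  · intro v
    rw [← Finset.sum_div, Finset.sum_comm, le_div_iff₀ hpos]
    refine (hp v).trans (le_of_eq (Finset.sum_congr rfl fun ω _ => ?_))
    rw [Finset.sum_ite_eq]
    simp

/-- flip the bit at `r` -/
def auxFlip {V : Type*} [DecidableEq V] (r : V) : (V → Bool) ≃ (V → Bool) where
  toFun s := fun x => if x = r then !(s x) else s x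
  invFun s := fun x => if x = r then !(s x) else s x
  left_inv s := by ext x; by_cases h : x = r <;> simp [h]
  right_inv s := by ext x; by_cases h : x = r <;> simp [h]

theorem aux_avg {V : Type*} [Fintype V] [DecidableEq V] (N : (V → Bool) → ℝ) (r r' : V)
    (h : ∀ s, 3 ≤ N s + N (auxFlip r s) + N (auxFlip r' s) + N (auxFlip r (auxFlip r' s))) :
    (3:ℝ) * Fintype.card (V → Bool) ≤ 4 * ∑ s, N s := by
  have h1 := Equiv.sum_comp (auxFlip r) N
  have h2 := Equiv.sum_comp (auxFlip r') N
  have h3 := Equiv.sum_comp (auxFlip r') (fun s => N (auxFlip r s))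
  have h4 : ∑ s : V → Bool, (3:ℝ) ≤ ∑ s, (N s + N (auxFlip r s) + N (auxFlip r' s) + N (auxFlip r (auxFlip r' s))) :=
    Finset.sum_le_sum fun s _ => h s
  simp only [Finset.sum_add_distrib, Finset.sum_const, Finset.card_univ, nsmul_eq_mul] at h4
  linarith

theorem aux_number {V : Type*} [Fintype V] (F : SimpleGraph V) (m : ℕ)
    (hF2 : ∀ v : V, (F.neighborSet v).ncard = 2)
    (hFcycles : ∀ (v : V) (w : F.Walk v v), w.IsCycle → m ≤ w.length) :
    ∃ (len : F.ConnectedComponent → ℕ) (idx : V → ℕ),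
      (∀ C, m ≤ len C) ∧
      (∀ v, idx v < len (F.connectedComponentMk v)) ∧
      (∀ v w, F.connectedComponentMk v = F.connectedComponentMk w → idx v = idx w → v = w) ∧
      (∀ v w, F.Adj v w → idx w = idx v + 1 ∨ idx v = idx w + 1 ∨
        (idx v = 0 ∧ idx w + 1 = len (F.connectedComponentMk v)) ∨
        (idx w = 0 ∧ idx v + 1 = len (F.connectedComponentMk v))) := by
  classical
  have hcyc : F.IsCycles := fun v _ => hF2 v
  have hne : ∀ v, (F.neighborSet v).Nonempty := fun v =>
    Set.nonempty_of_ncard_ne_zero (by rw [hF2 v]; norm_num)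
  have hex : ∀ C : F.ConnectedComponent, ∃ (v : V) (p : F.Walk v v),
      p.IsCycle ∧ p.toSubgraph.verts = C.supp := by
    intro C
    obtain ⟨v, hv⟩ := C.nonempty_supp
    exact ⟨v, hcyc.exists_cycle_toSubgraph_verts_eq_connectedComponentSupp hv (hne v)⟩
  choose b p hp hps using hex
  have hidx : ∀ v, ∃ i, i < (p (F.connectedComponentMk v)).length ∧
      (p (F.connectedComponentMk v)).getVert i = v := by
    intro v
    have hv : v ∈ (p (F.connectedComponentMk v)).toSubgraph.verts := by
      rw [hps]; exact rfl
    rw [SimpleGraph.Walk.mem_verts_toSubgraph, SimpleGraph.Walk.mem_support_iff_exists_getVert] at hv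
    obtain ⟨i, hi, hil⟩ := hv
    rcases Nat.lt_or_ge i (p (F.connectedComponentMk v)).length with h | h
    · exact ⟨i, h, hi⟩
    · have h3 := (hp (F.connectedComponentMk v)).three_le_length
      refine ⟨0, by omega, ?_⟩
      have : i = (p (F.connectedComponentMk v)).length := by omega
      rw [this, SimpleGraph.Walk.getVert_length] at hi
      rw [SimpleGraph.Walk.getVert_zero, hi]
  choose idx hlt hget using hidx
  refine ⟨fun C => (p C).length, idx, fun C => hFcycles _ _ (hp C), hlt, ?_, ?_⟩
  · intro v w hC hi
    rw [← hget v, ← hget w, hi, hC]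
  · intro v w hvw
    have hC : F.connectedComponentMk v = F.connectedComponentMk w :=
      SimpleGraph.ConnectedComponent.connectedComponentMk_eq_of_adj hvw
    have hv : v ∈ (p (F.connectedComponentMk v)).toSubgraph.verts := by
      rw [hps]; exact rfl
    have hadj := ((hp (F.connectedComponentMk v)).adj_toSubgraph_iff_of_isCycles hcyc hv w).2 hvw
    rw [SimpleGraph.Walk.toSubgraph_adj_iff] at hadj
    obtain ⟨i, hi, hil⟩ := hadj
    have g1 := hget v
    have g2 := hget w
    have l1 := hlt v
    have l2 := hlt w
    rw [← hC] at g2 l2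
    have hcp := hp (F.connectedComponentMk v)
    beta_reduce
    revert hi hil g1 g2 l1 l2 hcp
    generalize p (F.connectedComponentMk v) = q
    intro hi hil g1 g2 l1 l2 hcp
    have inj : ∀ a c, a < q.length → c < q.length → q.getVert a = q.getVert c → a = c := by
      intro a c ha hc h
      exact hcp.getVert_injOn' (by simp; omega) (by simp; omega) h
    have hsucc : ∀ x j, j < q.length → q.getVert (i+1) = x → q.getVert j = x →
        j = i + 1 ∨ (j = 0 ∧ i + 1 = q.length) := by
      intro x j hj h1 h2
      rcases Nat.lt_or_ge (i+1) q.length with h | h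
      · left; exact inj _ _ hj h (h2.trans h1.symm)
      · right
        have he : i + 1 = q.length := by omega
        refine ⟨inj _ _ hj (by omega) ?_, he⟩
        rw [h2, ← h1, he, q.getVert_length, q.getVert_zero]
    rw [Sym2.eq_iff] at hi
    rcases hi with ⟨h1, h2⟩ | ⟨h1, h2⟩
    · have e1 : idx v = i := inj _ _ l1 hil (g1.trans h1.symm)
      have := hsucc w (idx w) l2 h2 g2
      omega
    · have e1 : idx w = i := inj _ _ l2 hil (g2.trans h1.symm)
      have := hsucc v (idx v) l1 h2 g1
      omega

theorem aux_segments {V : Type*} [Fintype V] (F : SimpleGraph V) (m : ℕ) (hm : 3 ≤ m)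
    (hF2 : ∀ v : V, (F.neighborSet v).ncard = 2)
    (hFcycles : ∀ (v : V) (w : F.Walk v v), w.IsCycle → m ≤ w.length) :
    ∃ c : V → Fin m, ∀ k : Fin m, ∃ rep : V → V,
      (∀ r, {v : V | ¬ (c v = k) ∧ rep v = r}.ncard ≤ 2 * (m - 1)) ∧
      (∀ v w, F.Adj v w → c v ≠ k → c w ≠ k → rep v = rep w) := by
  classical
  obtain ⟨len, idx, hlen, hlt, hinj, hadj⟩ := aux_number F m hF2 hFcycles
  refine ⟨fun v => ⟨idx v % m, Nat.mod_lt _ (by omega)⟩, fun k => ?_⟩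
  obtain ⟨k, hk⟩ := k
  let A : ℕ → ℕ := fun i => (i + m - k) / m
  let last : V → Prop := fun v => A (idx v) = A (len (F.connectedComponentMk v) - 1)
  let seg : V → F.ConnectedComponent × ℕ := fun v =>
    (F.connectedComponentMk v, if last v then 0 else A (idx v))
  have hmod : ∀ v, (⟨idx v % m, Nat.mod_lt _ (by omega)⟩ : Fin m) ≠ ⟨k, hk⟩ →
      (idx v + m - k) % m ≠ 0 := by
    intro v hv h0
    apply hv
    ext
    simp only
    have hd := Nat.div_add_mod (idx v + m - k) m
    rw [h0] at hd
    generalize (idx v + m - k) / m = q at hd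
    have : idx v + m = k + m * q := by omega
    have h2 : (idx v + m) % m = (k + m * q) % m := by rw [this]
    simpa [Nat.mod_eq_of_lt hk] using h2
  have hstepA : ∀ i, (i + 1 + m - k) % m ≠ 0 → A (i + 1) = A i := by
    intro i h
    simp only [A]
    have : i + 1 + m - k = (i + m - k) + 1 := by omega
    rw [this] at h ⊢
    rw [Nat.succ_div, if_neg (fun hd => h (Nat.mod_eq_zero_of_dvd hd))]
    rfl
  have hA0 : (0 + m - k) % m ≠ 0 → A 0 = 0 := by
    intro h
    simp only [A]
    apply Nat.div_eq_of_lt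
    rcases Nat.eq_zero_or_pos k with h0 | h0
    · subst h0; simp at h
    · omega
  have hseg : ∀ v w, F.Adj v w → (idx v + m - k) % m ≠ 0 → (idx w + m - k) % m ≠ 0 →
      seg v = seg w := by
    intro v w hvw hv hw
    have hC : F.connectedComponentMk v = F.connectedComponentMk w :=
      SimpleGraph.ConnectedComponent.connectedComponentMk_eq_of_adj hvw
    have hgo : A (idx v) = A (idx w) → seg v = seg w := by
      intro h
      simp only [seg, last, hC, h]
    rcases hadj v w hvw with h | h | ⟨h1, h2⟩ | ⟨h1, h2⟩
    · apply hgo; rw [h] at hw ⊢; exact (hstepA _ hw).symm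
    · apply hgo; rw [h] at hv ⊢; exact hstepA _ hv
    · have e : idx w = len (F.connectedComponentMk v) - 1 := by omega
      rw [h1] at hv
      simp only [seg, last, h1, hA0 hv, ← hC, e]
      simp
    · have e : idx v = len (F.connectedComponentMk v) - 1 := by omega
      rw [h1] at hw
      simp only [seg, last, h1, hA0 hw, ← hC, e]
      simp
  rcases isEmpty_or_nonempty V with hV | hV
  · exact ⟨id, fun r => (hV.false r).elim, fun v => (hV.false v).elim⟩
  let rep : V → V := fun v => Function.invFun seg (seg v)
  have hrep : ∀ v, seg (rep v) = seg v := fun v => Function.invFun_eq ⟨v, rfl⟩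
  refine ⟨rep, ?_, ?_⟩
  · intro r
    let f : V → Bool × ℕ := fun v => (decide (last v), (idx v + m - k) % m)
    let T : Finset (Bool × ℕ) := Finset.univ ×ˢ Finset.Icc 1 (m - 1)
    have hT : T.card = 2 * (m - 1) := by simp [T]
    rw [← hT, ← Set.ncard_coe_finset T]
    apply Set.ncard_le_ncard_of_injOn f _ _ (Set.toFinite _)
    · rintro v ⟨hv, -⟩
      have h1 := hmod v hv
      have h2 := Nat.mod_lt (idx v + m - k) (show 0 < m by omega)
      simp only [T, f, Finset.coe_product, Set.mem_prod, Finset.mem_coe, Finset.mem_univ,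
        Finset.mem_Icc, true_and]
      omega
    · rintro v ⟨hv, hvr⟩ w ⟨hw, hwr⟩ he
      have hs : seg v = seg w := by rw [← hrep v, ← hrep w, hvr, hwr]
      simp only [seg, Prod.mk.injEq] at hs
      simp only [f, Prod.mk.injEq, decide_eq_decide] at he
      obtain ⟨hC, hs⟩ := hs
      obtain ⟨hl, hmd⟩ := he
      have hAe : A (idx v) = A (idx w) := by
        by_cases h : last v
        · have h' := hl.1 h
          simp only [last] at h h'
          rw [h, h', hC]
        · have h' : ¬ last w := fun x => h (hl.2 x)
          rwa [if_neg h, if_neg h'] at hs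
      apply hinj v w hC
      simp only [A] at hAe
      have d1 := Nat.div_add_mod (idx v + m - k) m
      have d2 := Nat.div_add_mod (idx w + m - k) m
      rw [hAe, hmd, d2] at d1
      omega
  · intro v w hvw hv hw
    simp only [rep]
    rw [hseg v w hvw (hmod v hv) (hmod w hw)]

theorem aux_mate {V : Type*} [Fintype V] [DecidableEq V] (G F : SimpleGraph V) [DecidableRel G.Adj]
    (hcubic : ∀ v : V, G.degree v = 3) (hFsub : F ≤ G)
    (hF2 : ∀ v : V, (F.neighborSet v).ncard = 2) (v : V) :
    ∃ u, ∀ w, G.Adj v w → ¬ F.Adj v w → w = u := by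
  have h1 : (G.neighborSet v).ncard = 3 := by
    rw [← hcubic v, ← SimpleGraph.card_neighborSet_eq_degree, ← Nat.card_coe_set_eq,
      Nat.card_eq_fintype_card]
  have hsub : F.neighborSet v ⊆ G.neighborSet v := fun w hw => hFsub hw
  have h2 : (G.neighborSet v \ F.neighborSet v).ncard = 1 := by
    rw [Set.ncard_sdiff hsub (Set.toFinite _), h1, hF2]
  obtain ⟨u, hu⟩ := Set.ncard_eq_one.1 h2
  refine ⟨u, fun w hw hf => ?_⟩
  have : w ∈ G.neighborSet v \ F.neighborSet v := ⟨hw, hf⟩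
  rw [hu] at this
  exact this

theorem random_red_set_of_two_factor
    {V : Type*} [Fintype V] [DecidableEq V] (G F : SimpleGraph V) [DecidableRel G.Adj]
    (g : ℕ) (hg : 5 ≤ g) (hodd : Odd g)
    (hcubic : ∀ v : V, G.degree v = 3)
    (hbridgeless : ∀ e ∈ G.edgeSet, ¬ G.IsBridge e)
    (hFsub : F ≤ G)
    (hF2 : ∀ v : V, (F.neighborSet v).ncard = 2)
    (hFcycles : ∀ (v : V) (w : F.Walk v v), w.IsCycle → (g + 1) / 2 ≤ w.length)
    (hoddgirth : ∀ (v : V) (w : G.Walk v v), w.IsCycle → Odd w.length → g ≤ w.length) :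
    ∃ μ : Finset V → ℝ,
      (∀ I, 0 ≤ μ I) ∧
      (∀ I : Finset V, μ I ≠ 0 → ∀ a ∈ I, ∀ b ∈ I, ¬ G.Adj a b) ∧
      (∑ I : Finset V, μ I = 1) ∧
      (∀ v : V,
        (3 / 8 : ℝ) * (1 - 2 / ((g : ℝ) + 1)) ≤
          ∑ I ∈ Finset.univ.filter (fun I : Finset V => v ∈ I), μ I) := by
  classical
  obtain ⟨n, hn⟩ := hodd
  obtain ⟨m, hm⟩ : ∃ m, m = (g + 1) / 2 := ⟨_, rfl⟩
  have hgm : g = 2 * m - 1 := by omega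
  have hm3 : 3 ≤ m := by omega
  rw [← hm] at hFcycles
  obtain ⟨c, hc⟩ := aux_segments F m hm3 hF2 hFcycles
  choose rep hsmall hrepF using hc
  have hcol := fun k => aux_colour G g hg hoddgirth (fun v => c v = k) (rep k)
    (fun r => (hsmall k r).trans (by omega))
  choose col hcol using hcol
  choose mate hmate using aux_mate G F hcubic hFsub hF2
  let e := Fintype.equivFin V
  -- initial red vertices
  let red : Fin m → (V → Bool) → V → Prop := fun k s v =>
    c v ≠ k ∧ (col k v ^^ s (rep k v)) = true
  have hred_rep : ∀ k s a b, G.Adj a b → red k s a → red k s b → rep k a ≠ rep k b := by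
    intro k s a b hab ha hb hr
    have h1 := hcol k a b hab ha.1 hb.1 hr
    have h2 := ha.2
    have h3 := hb.2
    rw [hr] at h2
    revert h1 h2 h3
    cases col k a <;> cases col k b <;> cases s (rep k b) <;> simp
  have hred_mate : ∀ k s a b, G.Adj a b → red k s a → red k s b → b = mate a := by
    intro k s a b hab ha hb
    apply hmate a b hab
    intro hf
    exact hred_rep k s a b hab ha hb (hrepF k a b hf ha.1 hb.1)
  let loses : Fin m → (V → Bool) → Bool → V → Prop := fun k s t v =>
    ∃ w, G.Adj v w ∧ red k s w ∧ (t = true ↔ e v < e w)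
  let X : Fin m × (V → Bool) × Bool → Finset V := fun ω =>
    Finset.univ.filter fun v => red ω.1 ω.2.1 v ∧ ¬ loses ω.1 ω.2.1 ω.2.2 v
  have : Nonempty (Fin m) := ⟨⟨0, by omega⟩⟩
  refine aux_dist G X _ ?_ ?_
  · rintro ⟨k, s, t⟩ a ha b hb hab
    simp only [X, Finset.mem_filter, Finset.mem_univ, true_and] at ha hb
    have hne : e a ≠ e b := fun h => hab.ne (e.injective h)
    have h1 : ¬ (t = true ↔ e a < e b) := fun h => ha.2 ⟨b, hab, hb.1, h⟩
    have h2 : ¬ (t = true ↔ e b < e a) := fun h => hb.2 ⟨a, hab.symm, ha.1, h⟩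
    rcases lt_or_gt_of_ne hne with h | h
    · have h' := not_lt.2 h.le
      tauto
    · have h' := not_lt.2 h.le
      tauto
  · intro v
    let N : Fin m → (V → Bool) → ℝ := fun k s =>
      ∑ t : Bool, if v ∈ X (k, s, t) then (1:ℝ) else 0
    have hN0 : ∀ k s, 0 ≤ N k s := fun k s =>
      Finset.sum_nonneg fun t _ => by split_ifs <;> norm_num
    -- red and mate not red in conflict
    have hN2 : ∀ k s, red k s v → (∀ w, G.Adj v w → ¬ red k s w) → N k s = 2 := by
      intro k s h1 h2
      have : ∀ t, v ∈ X (k, s, t) := by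
        intro t
        simp only [X, Finset.mem_filter, Finset.mem_univ, true_and]
        exact ⟨h1, fun ⟨w, hw, hw', _⟩ => h2 w hw hw'⟩
      simp only [N, this, if_true]
      simp
    have hN1 : ∀ k s, red k s v → 1 ≤ N k s := by
      intro k s h1
      let t : Bool := !(decide (e v < e (mate v)))
      have : v ∈ X (k, s, t) := by
        simp only [X, Finset.mem_filter, Finset.mem_univ, true_and]
        refine ⟨h1, ?_⟩
        rintro ⟨w, hw, hw', ht⟩
        have := hred_mate k s v w hw h1 hw'
        subst this
        by_cases h : e v < e (mate v) <;> simp [t, h] at ht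
      have h3 := Finset.single_le_sum (f := fun t => if v ∈ X (k, s, t) then (1:ℝ) else 0)
        (fun t _ => by split_ifs <;> norm_num) (Finset.mem_univ t)
      simp only [this, if_true] at h3
      exact h3
    have hkey : ∀ k, k ≠ c v → (3:ℝ) * Fintype.card (V → Bool) ≤ 4 * ∑ s, N k s := by
      intro k hk
      have hk' : c v ≠ k := hk.symm
      by_cases hr : rep k v = rep k (mate v)
      · -- same class: `v` never loses
        refine aux_avg (N k) (rep k v) (rep k v) fun s => ?_
        have hno : ∀ s, red k s v → N k s = 2 := by
          intro s h1
          refine hN2 k s h1 fun w hw hw' => ?_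
          have := hred_mate k s v w hw h1 hw'
          subst this
          exact hred_rep k s v _ hw h1 hw' hr
        by_cases h : red k s v
        · have h2 : red k (auxFlip (rep k v) (auxFlip (rep k v) s)) v := by
            refine ⟨hk', ?_⟩
            have := h.2
            simpa [auxFlip] using this
          rw [hno _ h, hno _ h2]
          linarith [hN0 k (auxFlip (rep k v) s)]
        · have h2 : red k (auxFlip (rep k v) s) v := by
            refine ⟨hk', ?_⟩
            have : ¬ (col k v ^^ s (rep k v)) = true := fun x => h ⟨hk', x⟩
            revert this
            simp only [auxFlip, Equiv.coe_fn_mk, if_true]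
            cases col k v <;> cases s (rep k v) <;> simp
          rw [hno _ h2]
          linarith [hN0 k s, hN0 k (auxFlip (rep k v) (auxFlip (rep k v) s))]
      · refine aux_avg (N k) (rep k v) (rep k (mate v)) fun s => ?_
        have hr' : rep k (mate v) ≠ rep k v := fun h => hr h.symm
        -- bounds depending only on the two relevant bits
        have hb : ∀ s, (if (col k v ^^ s (rep k v)) = true then
            (if (col k (mate v) ^^ s (rep k (mate v))) = true then (1:ℝ) else 2) else 0) ≤ N k s := by
          intro s
          split_ifs with h1 h2
          · exact hN1 k s ⟨hk', h1⟩
          · refine (hN2 k s ⟨hk', h1⟩ fun w hw hw' => ?_).ge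
            have := hred_mate k s v w hw ⟨hk', h1⟩ hw'
            subst this
            exact h2 hw'.2
          · exact hN0 k s
        have b1 := hb s
        have b2 := hb (auxFlip (rep k v) s)
        have b3 := hb (auxFlip (rep k (mate v)) s)
        have b4 := hb (auxFlip (rep k v) (auxFlip (rep k (mate v)) s))
        simp only [auxFlip, Equiv.coe_fn_mk, if_true, if_neg hr, if_neg hr'] at b1 b2 b3 b4 ⊢
        revert b1 b2 b3 b4
        cases col k v <;> cases s (rep k v) <;> cases col k (mate v) <;>
          cases s (rep k (mate v)) <;> simp <;> intros <;> linarith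
    have hsum : ∑ ω, (if v ∈ X ω then (1:ℝ) else 0) = ∑ k, ∑ s, N k s := by
      simp only [N]
      rw [Fintype.sum_prod_type]
      refine Finset.sum_congr rfl fun k _ => ?_
      rw [Fintype.sum_prod_type]
    rw [hsum]
    have hB : ∑ k ∈ Finset.univ.erase (c v), (3/4:ℝ) * Fintype.card (V → Bool)
        ≤ ∑ k, ∑ s, N k s := by
      refine (Finset.sum_le_sum (g := fun k => ∑ s, N k s) fun k hk => ?_).trans
        (Finset.sum_le_sum_of_subset_of_nonneg (Finset.erase_subset _ _)
          fun k _ _ => Finset.sum_nonneg fun s _ => hN0 k s)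
      have := hkey k (Finset.ne_of_mem_erase hk)
      linarith
    refine le_trans (le_of_eq ?_) hB
    rw [Finset.sum_const, Finset.card_erase_of_mem (Finset.mem_univ _), Finset.card_univ,
      Fintype.card_fin, nsmul_eq_mul, Fintype.card_prod, Fintype.card_prod, Fintype.card_bool,
      Fintype.card_fin, Nat.cast_sub (by omega)]
    have hgR : (g:ℝ) + 1 = 2 * m := by
      have : g + 1 = 2 * m := by omega
      exact_mod_cast this
    have hm0 : (m:ℝ) ≠ 0 := by
      have : m ≠ 0 := by omega
      exact_mod_cast this
    rw [hgR]
    push_cast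
    field_simp
    ring
end
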